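/- Let X ∼ CN(0, P̄ I_{M_T}) be a circularly symmetric complex Gaussian vector in C^{M_T}, A ∈ C^{M_R×M_T}, and K₁, K₂ > 0. Then with n = M_T − 1, E[ (‖AX‖² + K₁)/(‖X‖² + K₂) ] = ‖A‖_F²/(n+1) + ( K₁/K₂ − ‖A‖_F²/(n+1) ) · (K₂/P̄)^{n+1} · exp(K₂/P̄) · Γ(−n, K₂/P̄), where Γ(−n, t) = ∫_t^∞ u^{−n−1} e^{−u} du and ‖A‖_F is the Frobenius norm. -/

import Mathlib

open Real

/-!
The density of `X` depends on `‖X‖²` only. Changing the sign of one coordinate or exchanging two of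
them preserves such a density, so the mean of `X* B X` against any weight depending on `‖X‖²` only
is `tr B / M` times the weighted mean of `‖X‖²`; for `‖A X‖²` one takes `B = A* A`. Since
`r / (r + K) = 1 - K / (r + K)`, everything reduces to `E[1 / (‖X‖² + K)]`. Writing
`1 / (r + K) = ∫₀^∞ e^{-(r + K) s} ds` and exchanging the integrals turns this into the integral of
`e^{-K s}` against the Laplace transform `(1 + P s)^{-M}` of `‖X‖²`, which the substitution
`u = K / P + K s` identifies with an incomplete Gamma function.
-/

section CoordinateSymmetries

open MeasureTheory

variable {ι G E : Type*} [Fintype ι] [MeasureSpace G] [SigmaFinite (volume : Measure G)]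
  [NormedAddCommGroup E] [NormedSpace ℝ E]

lemma integral_comp_update_neg [DecidableEq ι] [InvolutiveNeg G] [MeasurableNeg G]
    [(volume : Measure G).IsNegInvariant] (j : ι) (f : (ι → G) → E) :
    ∫ x, f (Function.update x j (-x j)) = ∫ x, f x := by
  let flip (i : ι) : G ≃ᵐ G := if i = j then .neg G else .refl G
  have flip_preserves (i : ι) : MeasurePreserving (flip i) volume volume := by
    by_cases hij : i = j
    · simpa [flip, hij] using Measure.measurePreserving_neg (volume : Measure G)
    · simp only [flip, hij, if_false]
      exact MeasurePreserving.id volume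
  have flip_eq_update (x : ι → G) :
      MeasurableEquiv.piCongrRight flip x = Function.update x j (-x j) := by
    ext i
    by_cases hij : i = j
    · subst hij
      simp [flip, MeasurableEquiv.piCongrRight]
    · simp [flip, MeasurableEquiv.piCongrRight, hij]
  simpa only [flip_eq_update] using MeasurePreserving.integral_comp'
    (f := MeasurableEquiv.piCongrRight flip) (volume_preserving_pi flip_preserves) f

lemma integral_comp_perm (σ : Equiv.Perm ι) (f : (ι → G) → E) :
    ∫ x, f (x ∘ σ) = ∫ x, f x :=
  (volume_preserving_arrowCongr' σ.symm (.refl G) (.id volume)).integral_comp' f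

end CoordinateSymmetries

section SqNorm

open Complex (normSq)

variable {ι : Type*} [Fintype ι]

/-- The squared Euclidean norm of `x : ι → ℂ`. The type `ι → ℂ` itself carries the supremum norm,
so this is not `‖x‖ ^ 2`. -/
def sqNorm (x : ι → ℂ) : ℝ :=
  ∑ i, normSq (x i)

lemma sqNorm_nonneg (x : ι → ℂ) : 0 ≤ sqNorm x :=
  Finset.sum_nonneg fun _ _ => Complex.normSq_nonneg _

lemma continuous_sqNorm : Continuous (sqNorm : (ι → ℂ) → ℝ) :=
  continuous_finsetSum _ fun i _ => Complex.continuous_normSq.comp (continuous_apply i)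

lemma normSq_apply_le_sqNorm (x : ι → ℂ) (j : ι) : normSq (x j) ≤ sqNorm x :=
  Finset.single_le_sum (f := fun i => normSq (x i)) (fun _ _ => Complex.normSq_nonneg _)
    (Finset.mem_univ j)

lemma sqNorm_update_neg [DecidableEq ι] (x : ι → ℂ) (j : ι) :
    sqNorm (Function.update x j (-x j)) = sqNorm x := by
  refine Finset.sum_congr rfl fun i _ => ?_
  by_cases hij : i = j
  · subst hij
    simp
  · simp [hij]

lemma sqNorm_comp_perm (x : ι → ℂ) (σ : Equiv.Perm ι) : sqNorm (x ∘ σ) = sqNorm x :=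
  Equiv.sum_comp σ fun i => normSq (x i)

lemma norm_star_apply_mul_apply_le_sqNorm (x : ι → ℂ) (j k : ι) :
    ‖star (x j) * x k‖ ≤ sqNorm x := by
  have hj := normSq_apply_le_sqNorm x j
  have hk := normSq_apply_le_sqNorm x k
  rw [Complex.normSq_eq_norm_sq] at hj hk
  rw [norm_mul, norm_star]
  linarith [two_mul_le_add_sq ‖x j‖ ‖x k‖]

end SqNorm

section QuadraticForm

open Matrix

variable {ι κ : Type*} [Fintype ι] [Fintype κ]

lemma re_star_dotProduct_mulVec (B : Matrix ι ι ℂ) (x : ι → ℂ) :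
    (star x ⬝ᵥ B *ᵥ x).re = ∑ j, ∑ k, (B j k * (star (x j) * x k)).re := by
  simp only [dotProduct, mulVec, Finset.mul_sum, Complex.re_sum, Pi.star_apply, mul_left_comm]

lemma re_star_dotProduct_conjTranspose_mul_self_mulVec (A : Matrix κ ι ℂ) (x : ι → ℂ) :
    (star x ⬝ᵥ (Aᴴ * A) *ᵥ x).re = sqNorm (A *ᵥ x) := by
  rw [← mulVec_mulVec, dotProduct_mulVec, vecMul_conjTranspose, star_star]
  simp [dotProduct, sqNorm, Complex.normSq_apply]

lemma re_trace_conjTranspose_mul_self (A : Matrix κ ι ℂ) :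
    (Aᴴ * A).trace.re = ∑ i, sqNorm (A i) := by
  simp only [trace, diag_apply, mul_apply, conjTranspose_apply, Complex.re_sum, sqNorm]
  rw [Finset.sum_comm]
  simp [Complex.normSq_apply]

end QuadraticForm

section RadialWeight

open MeasureTheory Matrix
open Complex (normSq)

variable {ι : Type*} [Fintype ι] {f : ℝ → ℝ}

lemma integrable_re_mul_star_mul_mul_radial
    (hf : Integrable fun x : ι → ℂ => sqNorm x * f (sqNorm x)) (c : ℂ) (j k : ι) :
    Integrable fun x : ι → ℂ => (c * (star (x j) * x k)).re * f (sqNorm x) := by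
  have abs_form_le (x : ι → ℂ) : |(c * (star (x j) * x k)).re| ≤ ‖c‖ * sqNorm x := by
    refine (Complex.abs_re_le_norm _).trans ?_
    rw [norm_mul]
    gcongr
    exact norm_star_apply_mul_apply_le_sqNorm x j k
  -- The form is a bounded measurable multiple of `sqNorm x`, vanishing where `sqNorm x` does.
  have measurable_quotient :
      Measurable fun x : ι → ℂ => (c * (star (x j) * x k)).re / sqNorm x :=
    Measurable.div (Continuous.measurable (by fun_prop)) continuous_sqNorm.measurable
  refine (hf.bdd_mul measurable_quotient.aestronglyMeasurable (c := ‖c‖)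
    (.of_forall fun x => ?_)).congr (.of_forall fun x => ?_)
  · rw [norm_div, norm_eq_abs, norm_of_nonneg (sqNorm_nonneg x)]
    exact div_le_of_le_mul₀ (sqNorm_nonneg x) (norm_nonneg c) (abs_form_le x)
  · dsimp only
    rcases eq_or_ne (sqNorm x) 0 with h0 | h0
    · have form_eq_zero : (c * (star (x j) * x k)).re = 0 := by simpa [h0] using abs_form_le x
      rw [form_eq_zero, zero_div, zero_mul, zero_mul]
    · field_simp

lemma integral_re_mul_star_mul_mul_radial_of_ne (f : ℝ → ℝ) (c : ℂ) {j k : ι} (hjk : j ≠ k) :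
    ∫ x : ι → ℂ, (c * (star (x j) * x k)).re * f (sqNorm x) = 0 := by
  classical
  have neg_eq_self := integral_comp_update_neg j
    fun x : ι → ℂ => (c * (star (x j) * x k)).re * f (sqNorm x)
  simp only [sqNorm_update_neg, Function.update_self, Function.update_of_ne hjk.symm, star_neg,
    neg_mul, mul_neg, Complex.neg_re, integral_neg] at neg_eq_self
  linarith

lemma integral_normSq_apply_mul_radial_eq (f : ℝ → ℝ) (j k : ι) :
    ∫ x : ι → ℂ, normSq (x j) * f (sqNorm x) = ∫ x : ι → ℂ, normSq (x k) * f (sqNorm x) := by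
  classical
  simpa [sqNorm_comp_perm] using integral_comp_perm (Equiv.swap j k)
    fun x : ι → ℂ => normSq (x k) * f (sqNorm x)

lemma re_mul_star_mul_self (c z : ℂ) : (c * (star z * z)).re = c.re * normSq z := by
  rw [Complex.star_def, ← Complex.normSq_eq_conj_mul_self, Complex.re_mul_ofReal]

lemma integral_normSq_apply_mul_radial
    (hf : Integrable fun x : ι → ℂ => sqNorm x * f (sqNorm x)) (j : ι) :
    ∫ x : ι → ℂ, normSq (x j) * f (sqNorm x) =
      (∫ x : ι → ℂ, sqNorm x * f (sqNorm x)) / Fintype.card ι := by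
  have integrable_coord (k : ι) : Integrable fun x : ι → ℂ => normSq (x k) * f (sqNorm x) := by
    have := integrable_re_mul_star_mul_mul_radial hf 1 k k
    simp_rw [re_mul_star_mul_self, Complex.one_re, one_mul] at this
    exact this
  have : Nonempty ι := ⟨j⟩
  rw [eq_div_iff (by positivity)]
  calc (∫ x : ι → ℂ, normSq (x j) * f (sqNorm x)) * Fintype.card ι
      = ∑ k, ∫ x : ι → ℂ, normSq (x k) * f (sqNorm x) := by
        rw [Finset.sum_congr rfl fun k _ => integral_normSq_apply_mul_radial_eq f k j,
          Finset.sum_const, Finset.card_univ, nsmul_eq_mul, mul_comm]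
    _ = ∫ x : ι → ℂ, sqNorm x * f (sqNorm x) := by
        rw [← integral_finsetSum _ fun k _ => integrable_coord k]
        simp only [← Finset.sum_mul, sqNorm]

lemma integrable_re_star_dotProduct_mulVec_mul_radial
    (hf : Integrable fun x : ι → ℂ => sqNorm x * f (sqNorm x)) (B : Matrix ι ι ℂ) :
    Integrable fun x : ι → ℂ => (star x ⬝ᵥ B *ᵥ x).re * f (sqNorm x) := by
  simp_rw [re_star_dotProduct_mulVec, Finset.sum_mul]
  exact integrable_finsetSum _ fun j _ => integrable_finsetSum _ fun k _ =>
    integrable_re_mul_star_mul_mul_radial hf _ j k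

lemma integral_re_star_dotProduct_mulVec_mul_radial
    (hf : Integrable fun x : ι → ℂ => sqNorm x * f (sqNorm x)) (B : Matrix ι ι ℂ) :
    ∫ x : ι → ℂ, (star x ⬝ᵥ B *ᵥ x).re * f (sqNorm x) =
      B.trace.re / Fintype.card ι * ∫ x : ι → ℂ, sqNorm x * f (sqNorm x) := by
  have integrable_entry (j k : ι) := integrable_re_mul_star_mul_mul_radial hf (B j k) j k
  calc ∫ x : ι → ℂ, (star x ⬝ᵥ B *ᵥ x).re * f (sqNorm x)
      = ∑ j, ∑ k, ∫ x : ι → ℂ, (B j k * (star (x j) * x k)).re * f (sqNorm x) := by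
        simp_rw [re_star_dotProduct_mulVec, Finset.sum_mul]
        rw [integral_finsetSum _ fun j _ => integrable_finsetSum _ fun k _ => integrable_entry j k]
        exact Finset.sum_congr rfl fun j _ =>
          integral_finsetSum _ fun k _ => integrable_entry j k
    _ = ∑ j, ∫ x : ι → ℂ, (B j j * (star (x j) * x j)).re * f (sqNorm x) :=
        Finset.sum_congr rfl fun j _ => Fintype.sum_eq_single j fun k hkj =>
          integral_re_mul_star_mul_mul_radial_of_ne f _ hkj.symm
    _ = ∑ j, (B j j).re * ((∫ x : ι → ℂ, sqNorm x * f (sqNorm x)) / Fintype.card ι) := by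
        simp_rw [re_mul_star_mul_self, mul_assoc, integral_const_mul,
          integral_normSq_apply_mul_radial hf]
    _ = B.trace.re / Fintype.card ι * ∫ x : ι → ℂ, sqNorm x * f (sqNorm x) := by
        simp only [← Finset.sum_mul, trace, diag_apply, Complex.re_sum]
        ring

end RadialWeight

section LaplaceTransform

open MeasureTheory Set

lemma inv_eq_integral_exp_neg_mul {c : ℝ} (hc : 0 < c) : c⁻¹ = ∫ s in Ioi 0, exp (-c * s) := by
  rw [integral_exp_mul_Ioi (neg_neg_of_pos hc), mul_zero, exp_zero, neg_div_neg_eq, one_div]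

variable {α : Type*} [MeasurableSpace α] {μ : Measure α} {f g : α → ℝ} {K : ℝ}

lemma integrable_prod_exp_neg_mul_add_mul [SFinite μ] (hf : Integrable f μ) (hg : Measurable g)
    (hg_nonneg : ∀ x, 0 ≤ g x) (hK : 0 < K) :
    Integrable (fun p : α × ℝ => f p.1 * exp (-(g p.1 + K) * p.2))
      (μ.prod (volume.restrict (Ioi 0))) := by
  have integrable_bound := hf.norm.mul_prod (exp_neg_integrableOn_Ioi 0 hK)
  refine integrable_bound.mono (hf.aestronglyMeasurable.comp_fst.mul ?_) ?_
  · exact Measurable.aestronglyMeasurable (by fun_prop)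
  · have snd_pos : ∀ᵐ p : α × ℝ ∂μ.prod (volume.restrict (Ioi 0)), 0 < p.2 :=
      Measure.quasiMeasurePreserving_snd.ae (ae_restrict_mem measurableSet_Ioi)
    filter_upwards [snd_pos] with p hp
    simp only [norm_mul, norm_norm, norm_of_nonneg (exp_pos _).le]
    gcongr
    linarith [hg_nonneg p.1]

lemma integral_div_add_eq_integral_exp_neg_mul_laplace [SFinite μ] (hf : Integrable f μ)
    (hg : Measurable g) (hg_nonneg : ∀ x, 0 ≤ g x) (hK : 0 < K) :
    ∫ x, f x / (g x + K) ∂μ =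
      ∫ s in Ioi 0, exp (-K * s) * ∫ x, f x * exp (-s * g x) ∂μ := by
  calc ∫ x, f x / (g x + K) ∂μ
      = ∫ x, (∫ s in Ioi 0, f x * exp (-(g x + K) * s)) ∂μ := by
        refine integral_congr_ae (.of_forall fun x => ?_)
        dsimp only
        rw [integral_const_mul, div_eq_mul_inv,
          inv_eq_integral_exp_neg_mul (add_pos_of_nonneg_of_pos (hg_nonneg x) hK)]
    _ = ∫ s in Ioi 0, ∫ x, f x * exp (-(g x + K) * s) ∂μ :=
        integral_integral_swap (integrable_prod_exp_neg_mul_add_mul hf hg hg_nonneg hK)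
    _ = ∫ s in Ioi 0, exp (-K * s) * ∫ x, f x * exp (-s * g x) ∂μ := by
        simp_rw [← integral_const_mul, mul_left_comm _ (f _), ← exp_add]
        refine integral_congr_ae (.of_forall fun s => integral_congr_ae (.of_forall fun x => ?_))
        ring_nf

lemma integral_exp_neg_mul_mul_one_add_mul_rpow {P K : ℝ} (hP : 0 < P) (hK : 0 < K) (a : ℝ) :
    ∫ s in Ioi 0, exp (-K * s) * (1 + P * s) ^ a =
      K⁻¹ * (K / P) ^ (-a) * exp (K / P) * ∫ u in Ioi (K / P), u ^ a * exp (-u) := by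
  have shift : ∫ u in Ioi (K / P), u ^ a * exp (-u) =
      ∫ v in Ioi 0, (v + K / P) ^ a * exp (-(v + K / P)) := by
    simpa using ((measurePreserving_add_right volume (K / P)).setIntegral_preimage_emb
      (measurableEmbedding_addRight (K / P)) (fun u => u ^ a * exp (-u)) (Ioi (K / P))).symm
  have scale := integral_comp_mul_left_Ioi'
    (fun v => (v + K / P) ^ a * exp (-(v + K / P))) 0 hK
  rw [mul_zero, smul_eq_mul] at scale
  rw [shift, ← scale, ← integral_const_mul, ← integral_const_mul]
  refine setIntegral_congr_fun measurableSet_Ioi fun s (hs : 0 < s) => ?_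
  have factor : K * s + K / P = K / P * (1 + P * s) := by
    field_simp
    ring
  have rpow_factor : (K * s + K / P) ^ a = (K / P) ^ a * (1 + P * s) ^ a := by
    rw [factor, mul_rpow (by positivity) (by positivity)]
  rw [rpow_factor, rpow_neg (by positivity), neg_add, exp_add, exp_neg (K / P), neg_mul]
  field_simp

end LaplaceTransform

section CircularGaussian

open MeasureTheory Matrix

variable {ι : Type*} [Fintype ι] {P K : ℝ}

/-- The density, with respect to Lebesgue measure on `ι → ℂ`, of the circularly symmetric complex
Gaussian law `CN(0, P I)`, under which each real and imaginary part has variance `P / 2`. -/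
noncomputable def circularGaussianPDF (P : ℝ) (x : ι → ℂ) : ℝ :=
  ((π * P) ^ Fintype.card ι)⁻¹ * exp (-sqNorm x / P)

lemma integral_exp_neg_mul_sqNorm {c : ℝ} (hc : 0 < c) :
    ∫ x : ι → ℂ, exp (-c * sqNorm x) = (π / c) ^ Fintype.card ι := by
  have single : ∫ z : ℂ, exp (-c * ‖z‖ ^ 2) = π / c := by
    simpa using GaussianFourier.integral_rexp_neg_mul_sq_norm (V := ℂ) hc
  rw [← single, ← integral_fintype_prod_volume_eq_pow]
  simp only [sqNorm, Complex.normSq_eq_norm_sq, Finset.mul_sum, exp_sum]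

lemma integral_circularGaussianPDF_mul_exp_neg_mul_sqNorm (hP : 0 < P) {s : ℝ} (hs : 0 ≤ s) :
    ∫ x : ι → ℂ, circularGaussianPDF P x * exp (-s * sqNorm x) =
      (1 + P * s) ^ (-(Fintype.card ι : ℝ)) := by
  calc ∫ x : ι → ℂ, circularGaussianPDF P x * exp (-s * sqNorm x)
      = ((π * P) ^ Fintype.card ι)⁻¹ * ∫ x : ι → ℂ, exp (-(P⁻¹ + s) * sqNorm x) := by
        simp_rw [← integral_const_mul, circularGaussianPDF, mul_assoc, ← exp_add]
        refine integral_congr_ae (.of_forall fun x => ?_)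
        ring_nf
    _ = (1 + P * s) ^ (-(Fintype.card ι : ℝ)) := by
        rw [integral_exp_neg_mul_sqNorm (by positivity), rpow_neg (by positivity), rpow_natCast,
          ← inv_pow, ← inv_pow, ← mul_pow]
        congr 1
        field_simp

lemma integral_circularGaussianPDF (hP : 0 < P) :
    ∫ x : ι → ℂ, circularGaussianPDF P x = 1 := by
  simpa using integral_circularGaussianPDF_mul_exp_neg_mul_sqNorm (ι := ι) hP le_rfl

lemma integrable_circularGaussianPDF (hP : 0 < P) :
    Integrable (circularGaussianPDF P : (ι → ℂ) → ℝ) :=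
  integrable_of_integral_eq_one (integral_circularGaussianPDF hP)

lemma integral_circularGaussianPDF_div_sqNorm_add (hP : 0 < P) (hK : 0 < K) :
    ∫ x : ι → ℂ, circularGaussianPDF P x / (sqNorm x + K) =
      K⁻¹ * (K / P) ^ Fintype.card ι * exp (K / P) *
        ∫ u in Set.Ioi (K / P), u ^ (-(Fintype.card ι : ℝ)) * exp (-u) := by
  rw [integral_div_add_eq_integral_exp_neg_mul_laplace (integrable_circularGaussianPDF hP)
      continuous_sqNorm.measurable sqNorm_nonneg hK,
    setIntegral_congr_fun measurableSet_Ioi fun s (hs : 0 < s) => by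
      rw [integral_circularGaussianPDF_mul_exp_neg_mul_sqNorm hP hs.le],
    integral_exp_neg_mul_mul_one_add_mul_rpow hP hK, neg_neg, rpow_natCast]

lemma integrable_circularGaussianPDF_div_sqNorm_add (hP : 0 < P) (hK : 0 < K) :
    Integrable fun x : ι → ℂ => circularGaussianPDF P x / (sqNorm x + K) := by
  simp_rw [div_eq_mul_inv]
  refine (integrable_circularGaussianPDF hP).mul_bdd (c := K⁻¹)
    (continuous_sqNorm.measurable.add_const K).inv.aestronglyMeasurable (.of_forall fun x => ?_)
  have hx := sqNorm_nonneg x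
  rw [norm_of_nonneg (by positivity)]
  gcongr
  linarith

lemma sqNorm_mul_circularGaussianPDF_div_sqNorm_add (hK : 0 < K) (x : ι → ℂ) :
    sqNorm x * (circularGaussianPDF P x / (sqNorm x + K)) =
      circularGaussianPDF P x - K * (circularGaussianPDF P x / (sqNorm x + K)) := by
  have hx : sqNorm x + K ≠ 0 := (add_pos_of_nonneg_of_pos (sqNorm_nonneg x) hK).ne'
  field_simp
  ring

lemma integrable_sqNorm_mul_circularGaussianPDF_div_sqNorm_add (hP : 0 < P) (hK : 0 < K) :
    Integrable fun x : ι → ℂ => sqNorm x * (circularGaussianPDF P x / (sqNorm x + K)) := by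
  simp_rw [sqNorm_mul_circularGaussianPDF_div_sqNorm_add hK]
  exact (integrable_circularGaussianPDF hP).sub
    ((integrable_circularGaussianPDF_div_sqNorm_add hP hK).const_mul K)

lemma integral_sqNorm_mul_circularGaussianPDF_div_sqNorm_add (hP : 0 < P) (hK : 0 < K) :
    ∫ x : ι → ℂ, sqNorm x * (circularGaussianPDF P x / (sqNorm x + K)) =
      1 - K * ∫ x : ι → ℂ, circularGaussianPDF P x / (sqNorm x + K) := by
  simp_rw [sqNorm_mul_circularGaussianPDF_div_sqNorm_add hK]
  rw [integral_sub (integrable_circularGaussianPDF hP)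
      ((integrable_circularGaussianPDF_div_sqNorm_add hP hK).const_mul K),
    integral_circularGaussianPDF hP, integral_const_mul]

theorem expectation_ratio_quadratic_forms_general [Nonempty ι] (B : Matrix ι ι ℂ) (K₁ : ℝ)
    {K₂ : ℝ} (hP : 0 < P) (hK₂ : 0 < K₂) :
    ∫ x : ι → ℂ, circularGaussianPDF P x *
        (((star x ⬝ᵥ B *ᵥ x).re + K₁) / (sqNorm x + K₂)) =
      B.trace.re / Fintype.card ι +
        (K₁ / K₂ - B.trace.re / Fintype.card ι) * (K₂ / P) ^ Fintype.card ι * exp (K₂ / P) *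
          ∫ u in Set.Ioi (K₂ / P), u ^ (-(Fintype.card ι : ℝ)) * exp (-u) := by
  let weight (r : ℝ) : ℝ := ((π * P) ^ Fintype.card ι)⁻¹ * exp (-r / P) / (r + K₂)
  have integrable_weight : Integrable fun x : ι → ℂ => weight (sqNorm x) :=
    integrable_circularGaussianPDF_div_sqNorm_add hP hK₂
  have integrable_sqNorm_mul_weight : Integrable fun x : ι → ℂ => sqNorm x * weight (sqNorm x) :=
    integrable_sqNorm_mul_circularGaussianPDF_div_sqNorm_add hP hK₂
  have integral_sqNorm_mul_weight : ∫ x : ι → ℂ, sqNorm x * weight (sqNorm x) =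
      1 - K₂ * ∫ x : ι → ℂ, weight (sqNorm x) :=
    integral_sqNorm_mul_circularGaussianPDF_div_sqNorm_add hP hK₂
  have integral_weight : ∫ x : ι → ℂ, weight (sqNorm x) = _ :=
    integral_circularGaussianPDF_div_sqNorm_add hP hK₂
  calc ∫ x : ι → ℂ, circularGaussianPDF P x *
        (((star x ⬝ᵥ B *ᵥ x).re + K₁) / (sqNorm x + K₂))
      = ∫ x : ι → ℂ, ((star x ⬝ᵥ B *ᵥ x).re * weight (sqNorm x) + K₁ * weight (sqNorm x)) := by
        refine integral_congr_ae (.of_forall fun x => ?_)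
        simp only [circularGaussianPDF, weight]
        ring
    _ = B.trace.re / Fintype.card ι * (1 - K₂ * ∫ x : ι → ℂ, weight (sqNorm x)) +
          K₁ * ∫ x : ι → ℂ, weight (sqNorm x) := by
        rw [integral_add
            (integrable_re_star_dotProduct_mulVec_mul_radial integrable_sqNorm_mul_weight B)
            (integrable_weight.const_mul K₁),
          integral_re_star_dotProduct_mulVec_mul_radial integrable_sqNorm_mul_weight,
          integral_sqNorm_mul_weight, integral_const_mul]
    _ = _ := by
        rw [integral_weight]
        field_simp
        ring

end CircularGaussian

/-- Lemma 1 of the paper: for `X ~ CN(0, P̄ I)` in `ℂ^{M_T}` and `K₁, K₂ > 0`,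
with `n = M_T - 1`,
`E[(‖AX‖² + K₁)/(‖X‖² + K₂)] = ‖A‖_F²/(n+1) + (K₁/K₂ - ‖A‖_F²/(n+1))
 (K₂/P̄)^{n+1} e^{K₂/P̄} Γ(-n, K₂/P̄)`. -/
theorem expectation_ratio_quadratic_forms (MR MT : ℕ) (hMT : 1 ≤ MT)
    (A : Matrix (Fin MR) (Fin MT) ℂ) (P K1 K2 : ℝ)
    (hP : 0 < P) (hK1 : 0 < K1) (hK2 : 0 < K2) :
    (∫ x : Fin MT → ℂ,
        ((Real.pi * P) ^ MT)⁻¹ * Real.exp (-(∑ j, Complex.normSq (x j)) / P) *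
          (((∑ i, Complex.normSq (∑ j, A i j * x j)) + K1) /
            ((∑ j, Complex.normSq (x j)) + K2))) =
      (∑ i, ∑ j, Complex.normSq (A i j)) / MT +
        (K1 / K2 - (∑ i, ∑ j, Complex.normSq (A i j)) / MT) * (K2 / P) ^ MT *
          Real.exp (K2 / P) *
          ∫ u in Set.Ioi (K2 / P), u ^ (-(MT : ℝ)) * Real.exp (-u) := by
  have : Nonempty (Fin MT) := ⟨⟨0, hMT⟩⟩
  simpa only [re_star_dotProduct_conjTranspose_mul_self_mulVec, re_trace_conjTranspose_mul_self,
    Fintype.card_fin, circularGaussianPDF] using!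
    expectation_ratio_quadratic_forms_general (A.conjTranspose * A) K1 hP hK2
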